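/- Let m > n ≥ 2 be integers with θ = log n / log m, and let ν, η, ρ be shift-invariant Borel probability measures on I^ℕ (I a finite alphabet with |I| = N) satisfying ρ = θ·ν + (1−θ)·η. Suppose a : I → ℕ with a(j) ≥ 1 for all j. Then (∑_j ν([j]) log a(j))/log m + h(ρ,σ)/log n ≤ log N / log n + log((∑_j a(j))/N) / log m, where h(·,σ) denotes Kolmogorov–Sinai entropy and [j] the cylinder on the first symbol. -/

import Mathlib

open MeasureTheory

/-- The shift map on one-sided sequences. -/
def seqShift {α : Type*} (ω : ℕ → α) : ℕ → α := fun i => ω (i + 1)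

/-- Shannon entropy of a measure on the full shift with respect to the partition into
cylinders of length `q`. -/
noncomputable def cylEntropy {ι : Type*} [Fintype ι] [MeasurableSpace ι] (μ : Measure (ℕ → ι)) (q : ℕ) : ℝ :=
  ∑ w : Fin q → ι, Real.negMulLog ((μ {x | ∀ i : Fin q, x (i : ℕ) = w i}).toReal)

/-- Kolmogorov–Sinai entropy of a shift-invariant measure on the full shift, computed
via the generating partition into first-coordinate cylinders: `h = inf_q H_q / q`. -/
noncomputable def shiftEntropy {ι : Type*} [Fintype ι] [MeasurableSpace ι] (μ : Measure (ℕ → ι)) : ℝ :=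
  ⨅ q : ℕ, cylEntropy μ (q + 1) / (q + 1)

/-!
Gibbs' inequality against the Bernoulli measure with weights `a j / A`, where `A = ∑ j, a j`, bounds
the entropy of `ν` on words of length `q` by `q (log A - ∑ j, ν[j] log a j)`, while that of `η` is
at most `q log N`. Word entropy is affine in the measure up to the entropy `H(θ, 1 - θ)` of the
mixing weights, an error independent of `q` which disappears on dividing by `q` and letting
`q → ∞`. This gives `h(ρ) ≤ θ (log A - ∑ j, ν[j] log a j) + (1 - θ) log N`; dividing by `log n` and
using `θ / log n = 1 / log m` finishes the proof.
-/

section FiniteEntropy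

open Real

lemma negMulLog_add_le {x y : ℝ} (hx : 0 ≤ x) (hy : 0 ≤ y) :
    negMulLog (x + y) ≤ negMulLog x + negMulLog y := by
  have mul_log_le {u v : ℝ} (hu : 0 ≤ u) (hv : 0 ≤ v) : u * log u ≤ u * log (u + v) := by
    rcases hu.eq_or_lt with rfl | hu
    · simp
    · gcongr
      linarith
  have hxy := mul_log_le hx hy
  have hyx := mul_log_le hy hx
  rw [add_comm y x] at hyx
  simp only [negMulLog]
  linarith

lemma negMulLog_le_neg_mul_log_add_sub {x y : ℝ} (hx : 0 ≤ x) (hy : 0 < y) :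
    negMulLog x ≤ -(x * log y) + (y - x) :=
  calc negMulLog x = negMulLog (y * (x / y)) := by rw [mul_div_cancel₀ x hy.ne']
    _ = x / y * negMulLog y + y * negMulLog (x / y) := negMulLog_mul y (x / y)
    _ ≤ x / y * negMulLog y + y * (1 - x / y) := by
      gcongr
      exact negMulLog_le_one_sub_self (div_nonneg hx hy.le)
    _ = -(x * log y) + (y - x) := by
      rw [negMulLog]
      field_simp

variable {α : Type*} [Fintype α]

lemma sum_negMulLog_le_neg_sum_mul_log {p r : α → ℝ} (hp : ∀ i, 0 ≤ p i) (hr : ∀ i, 0 < r i)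
    (hrp : ∑ i, r i ≤ ∑ i, p i) :
    ∑ i, negMulLog (p i) ≤ -∑ i, p i * log (r i) :=
  calc ∑ i, negMulLog (p i) ≤ ∑ i, (-(p i * log (r i)) + (r i - p i)) :=
        Finset.sum_le_sum fun i _ ↦ negMulLog_le_neg_mul_log_add_sub (hp i) (hr i)
    _ = -∑ i, p i * log (r i) + (∑ i, r i - ∑ i, p i) := by
      rw [Finset.sum_add_distrib, Finset.sum_neg_distrib, Finset.sum_sub_distrib]
    _ ≤ -∑ i, p i * log (r i) := by linarith

lemma sum_negMulLog_le_log_card [Nonempty α] {p : α → ℝ} (hp : ∀ i, 0 ≤ p i)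
    (hsum : ∑ i, p i = 1) : ∑ i, negMulLog (p i) ≤ log (Fintype.card α) := by
  have hcard : (0 : ℝ) < Fintype.card α := by exact_mod_cast Fintype.card_pos
  have gibbs := sum_negMulLog_le_neg_sum_mul_log (r := fun _ ↦ (Fintype.card α : ℝ)⁻¹) hp
    (fun _ ↦ inv_pos.2 hcard) (by simp [hsum])
  simpa [← Finset.sum_mul, hsum] using gibbs

end FiniteEntropy

lemma sum_measureReal_mul_eq_integral {Ω α : Type*} [MeasurableSpace Ω] [Fintype α]
    [MeasurableSpace α] [MeasurableSingletonClass α] {μ : Measure Ω} [IsFiniteMeasure μ]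
    {X : Ω → α} (hX : AEMeasurable X μ) (f : α → ℝ) :
    ∑ i, μ.real {x | X x = i} * f i = ∫ x, f (X x) ∂μ := by
  rw [← integral_map hX (Measurable.of_discrete (f := f)).aestronglyMeasurable,
    integral_fintype Integrable.of_finite]
  refine Finset.sum_congr rfl fun i _ ↦ ?_
  rw [map_measureReal_apply_of_aemeasurable hX (measurableSet_singleton i), smul_eq_mul]
  rfl

lemma measurable_seqShift {α : Type*} [MeasurableSpace α] :
    Measurable (seqShift : (ℕ → α) → ℕ → α) := by
  unfold seqShift
  fun_prop

lemma map_eval_eq_map_eval_zero {α : Type*} [MeasurableSpace α] {μ : Measure (ℕ → α)}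
    (hμ : μ.map seqShift = μ) (k : ℕ) : μ.map (fun x ↦ x k) = μ.map (fun x ↦ x 0) := by
  induction k with
  | zero => rfl
  | succ k ih =>
    calc μ.map (fun x ↦ x (k + 1)) = (μ.map seqShift).map (fun x ↦ x k) :=
          (Measure.map_map (measurable_pi_apply k) measurable_seqShift).symm
      _ = μ.map (fun x ↦ x 0) := by rw [hμ, ih]

lemma measureReal_eval_eq {α : Type*} [MeasurableSpace α] [MeasurableSingletonClass α]
    {μ : Measure (ℕ → α)} (hμ : μ.map seqShift = μ) (k : ℕ) (j : α) :
    μ.real {x | x k = j} = μ.real {x | x 0 = j} :=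
  calc μ.real {x | x k = j} = (μ.map fun x ↦ x k).real {j} :=
        (map_measureReal_apply (by fun_prop) (measurableSet_singleton j)).symm
    _ = (μ.map fun x ↦ x 0).real {j} := by rw [map_eval_eq_map_eval_zero hμ k]
    _ = μ.real {x | x 0 = j} :=
        map_measureReal_apply (by fun_prop) (measurableSet_singleton j)

/-- The measure of the cylinder of a word: `cylProb μ w` is `μ([w])`, as a real number. -/
noncomputable def cylProb {ι : Type*} [MeasurableSpace ι] (μ : Measure (ℕ → ι)) {q : ℕ}
    (w : Fin q → ι) : ℝ :=
  μ.real {x | ∀ i : Fin q, x i = w i}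

lemma cylProb_nonneg {ι : Type*} [MeasurableSpace ι] (μ : Measure (ℕ → ι)) {q : ℕ}
    (w : Fin q → ι) : 0 ≤ cylProb μ w :=
  measureReal_nonneg

lemma cylProb_add_smul {ι : Type*} [MeasurableSpace ι] (ν η : Measure (ℕ → ι))
    [IsFiniteMeasure ν] [IsFiniteMeasure η] {s t : ℝ} (hs : 0 ≤ s) (ht : 0 ≤ t) {q : ℕ}
    (w : Fin q → ι) :
    cylProb (ENNReal.ofReal s • ν + ENNReal.ofReal t • η) w =
      s * cylProb ν w + t * cylProb η w := by
  have := ν.smul_finite (ENNReal.ofReal_ne_top (r := s))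
  have := η.smul_finite (ENNReal.ofReal_ne_top (r := t))
  rw [cylProb, measureReal_add_apply, measureReal_ennreal_smul_apply,
    measureReal_ennreal_smul_apply, ENNReal.toReal_ofReal hs, ENNReal.toReal_ofReal ht]
  rfl

section Cylinders

variable {ι : Type*} [Fintype ι] [MeasurableSpace ι]

lemma cylEntropy_eq_sum_cylProb (μ : Measure (ℕ → ι)) (q : ℕ) :
    cylEntropy μ q = ∑ w : Fin q → ι, Real.negMulLog (cylProb μ w) :=
  rfl

lemma cylEntropy_nonneg (μ : Measure (ℕ → ι)) [IsProbabilityMeasure μ] (q : ℕ) :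
    0 ≤ cylEntropy μ q :=
  Finset.sum_nonneg fun w _ ↦ Real.negMulLog_nonneg (cylProb_nonneg μ w) measureReal_le_one

lemma shiftEntropy_le_cylEntropy_div (μ : Measure (ℕ → ι)) [IsProbabilityMeasure μ] (q : ℕ) :
    shiftEntropy μ ≤ cylEntropy μ (q + 1) / (q + 1) := by
  refine ciInf_le ⟨0, ?_⟩ q
  rintro _ ⟨k, rfl⟩
  exact div_nonneg (cylEntropy_nonneg μ _) (by positivity)

lemma shiftEntropy_le_of_cylEntropy_le {μ : Measure (ℕ → ι)} [IsProbabilityMeasure μ] {B C : ℝ}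
    (h : ∀ q : ℕ, cylEntropy μ q ≤ q * B + C) : shiftEntropy μ ≤ B := by
  have bound (q : ℕ) : shiftEntropy μ ≤ B + C * (1 / ((q : ℝ) + 1)) := by
    refine (shiftEntropy_le_cylEntropy_div μ q).trans ?_
    have hq := h (q + 1)
    push_cast at hq
    rw [div_le_iff₀ (by positivity)]
    field_simp
    linarith
  have lim : Filter.Tendsto (fun q : ℕ ↦ B + C * (1 / ((q : ℝ) + 1))) Filter.atTop (nhds B) := by
    simpa using (tendsto_one_div_add_atTop_nhds_zero_nat.const_mul C).const_add B
  exact ge_of_tendsto' lim bound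

variable [DiscreteMeasurableSpace ι]

lemma sum_cylProb_mul_eq_integral (μ : Measure (ℕ → ι)) [IsFiniteMeasure μ] {q : ℕ}
    (f : (Fin q → ι) → ℝ) :
    ∑ w, cylProb μ w * f w = ∫ x, f (fun i ↦ x i) ∂μ := by
  have hX : Measurable fun (x : ℕ → ι) (i : Fin q) ↦ x i := by fun_prop
  simpa only [cylProb, funext_iff] using sum_measureReal_mul_eq_integral hX.aemeasurable f

lemma sum_cylProb (μ : Measure (ℕ → ι)) [IsProbabilityMeasure μ] (q : ℕ) :
    ∑ w : Fin q → ι, cylProb μ w = 1 := by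
  simpa using sum_cylProb_mul_eq_integral μ (q := q) fun _ ↦ 1

lemma sum_cylProb_mul_sum {μ : Measure (ℕ → ι)} [IsFiniteMeasure μ] (hμ : μ.map seqShift = μ)
    (q : ℕ) (g : ι → ℝ) :
    ∑ w : Fin q → ι, cylProb μ w * ∑ i, g (w i) = q * ∑ j, μ.real {x | x 0 = j} * g j := by
  have coord (i : Fin q) :
      ∑ w : Fin q → ι, cylProb μ w * g (w i) = ∑ j, μ.real {x | x 0 = j} * g j := by
    rw [sum_cylProb_mul_eq_integral μ fun w ↦ g (w i),
      ← sum_measureReal_mul_eq_integral (measurable_pi_apply (i : ℕ)).aemeasurable]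
    simp_rw [measureReal_eval_eq hμ]
  simp_rw [Finset.mul_sum]
  rw [Finset.sum_comm]
  simp [coord, Finset.mul_sum]

lemma cylEntropy_le_mul_log_card [Nonempty ι] (μ : Measure (ℕ → ι)) [IsProbabilityMeasure μ]
    (q : ℕ) : cylEntropy μ q ≤ q * Real.log (Fintype.card ι) := by
  simpa [cylEntropy_eq_sum_cylProb] using
    sum_negMulLog_le_log_card (cylProb_nonneg μ) (sum_cylProb μ q)

lemma cylEntropy_le_neg_mul_sum_mul_log {μ : Measure (ℕ → ι)} [IsProbabilityMeasure μ]
    (hμ : μ.map seqShift = μ) {p : ι → ℝ} (hp : ∀ j, 0 < p j) (hsum : ∑ j, p j ≤ 1) (q : ℕ) :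
    cylEntropy μ q ≤ -(q * ∑ j, μ.real {x | x 0 = j} * Real.log (p j)) := by
  have bernoulli_sum : ∑ w : Fin q → ι, ∏ i, p (w i) ≤ ∑ w : Fin q → ι, cylProb μ w := by
    rw [← Fintype.sum_pow, sum_cylProb]
    exact pow_le_one₀ (Finset.sum_nonneg fun j _ ↦ (hp j).le) hsum
  have gibbs := sum_negMulLog_le_neg_sum_mul_log (cylProb_nonneg μ)
    (fun w ↦ Finset.prod_pos fun i _ ↦ hp (w i)) bernoulli_sum
  simpa only [cylEntropy_eq_sum_cylProb, Real.log_prod fun _ _ ↦ (hp _).ne',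
    sum_cylProb_mul_sum hμ q fun j ↦ Real.log (p j)] using gibbs

lemma cylEntropy_le_mul_log_sum_sub [Nonempty ι] {μ : Measure (ℕ → ι)} [IsProbabilityMeasure μ]
    (hμ : μ.map seqShift = μ) {a : ι → ℝ} (ha : ∀ j, 0 < a j) (q : ℕ) :
    cylEntropy μ q ≤
      q * (Real.log (∑ j, a j) - ∑ j, μ.real {x | x 0 = j} * Real.log (a j)) := by
  have hA : 0 < ∑ j, a j := Finset.sum_pos (fun j _ ↦ ha j) Finset.univ_nonempty
  have letter_sum : ∑ j, μ.real {x | x 0 = j} = 1 := by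
    simpa using sum_measureReal_mul_eq_integral (measurable_pi_apply 0).aemeasurable
      (μ := μ) fun _ ↦ 1
  have gibbs := cylEntropy_le_neg_mul_sum_mul_log hμ (fun j ↦ div_pos (ha j) hA)
    (by rw [← Finset.sum_div, div_self hA.ne']) q
  simp only [Real.log_div (ha _).ne' hA.ne', mul_sub, Finset.sum_sub_distrib,
    ← Finset.sum_mul, letter_sum] at gibbs
  linarith

lemma cylEntropy_add_smul_le (ν η : Measure (ℕ → ι)) [IsProbabilityMeasure ν]
    [IsProbabilityMeasure η] {s t : ℝ} (hs : 0 ≤ s) (ht : 0 ≤ t) (q : ℕ) :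
    cylEntropy (ENNReal.ofReal s • ν + ENNReal.ofReal t • η) q ≤
      s * cylEntropy ν q + t * cylEntropy η q + (Real.negMulLog s + Real.negMulLog t) := by
  have word_bound (w : Fin q → ι) :
      Real.negMulLog (cylProb (ENNReal.ofReal s • ν + ENNReal.ofReal t • η) w) ≤
        (cylProb ν w * Real.negMulLog s + s * Real.negMulLog (cylProb ν w)) +
          (cylProb η w * Real.negMulLog t + t * Real.negMulLog (cylProb η w)) := by
    rw [cylProb_add_smul ν η hs ht, ← Real.negMulLog_mul, ← Real.negMulLog_mul]
    exact negMulLog_add_le (mul_nonneg hs (cylProb_nonneg ν w))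
      (mul_nonneg ht (cylProb_nonneg η w))
  refine (Finset.sum_le_sum fun w _ ↦ word_bound w).trans_eq ?_
  simp only [Finset.sum_add_distrib, ← Finset.mul_sum, ← Finset.sum_mul, sum_cylProb,
    cylEntropy_eq_sum_cylProb]
  ring

lemma shiftEntropy_le_add_of_cylEntropy_le {ν η ρ : Measure (ℕ → ι)} [IsProbabilityMeasure ν]
    [IsProbabilityMeasure η] [IsProbabilityMeasure ρ] {s t B C : ℝ} (hs : 0 ≤ s) (ht : 0 ≤ t)
    (hρ : ρ = ENNReal.ofReal s • ν + ENNReal.ofReal t • η)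
    (hν : ∀ q : ℕ, cylEntropy ν q ≤ q * B) (hη : ∀ q : ℕ, cylEntropy η q ≤ q * C) :
    shiftEntropy ρ ≤ s * B + t * C := by
  refine shiftEntropy_le_of_cylEntropy_le (C := Real.negMulLog s + Real.negMulLog t) fun q ↦ ?_
  calc cylEntropy ρ q
      ≤ s * cylEntropy ν q + t * cylEntropy η q + (Real.negMulLog s + Real.negMulLog t) :=
        hρ ▸ cylEntropy_add_smul_le ν η hs ht q
    _ ≤ s * (q * B) + t * (q * C) + (Real.negMulLog s + Real.negMulLog t) := by
      gcongr
      exacts [hν q, hη q]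
    _ = q * (s * B + t * C) + (Real.negMulLog s + Real.negMulLog t) := by ring

theorem packing_entropy_bound_general [Nonempty ι] {b c : ℝ} (hb : 1 < b) (hbc : b ≤ c)
    {θ : ℝ} (hθ : θ = Real.log b / Real.log c) {ν η ρ : Measure (ℕ → ι)}
    [IsProbabilityMeasure ν] [IsProbabilityMeasure η] [IsProbabilityMeasure ρ]
    (hν : ν.map seqShift = ν)
    (hρ : ρ = ENNReal.ofReal θ • ν + ENNReal.ofReal (1 - θ) • η)
    {a : ι → ℝ} (ha : ∀ j, 0 < a j) :
    (∑ j, ν.real {x | x 0 = j} * Real.log (a j)) / Real.log c + shiftEntropy ρ / Real.log b ≤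
      Real.log (Fintype.card ι) / Real.log b +
        Real.log ((∑ j, a j) / Fintype.card ι) / Real.log c := by
  have hlogb : 0 < Real.log b := Real.log_pos hb
  have hlogbc : Real.log b ≤ Real.log c := Real.log_le_log (by linarith) hbc
  have hlogc : 0 < Real.log c := hlogb.trans_le hlogbc
  have hθ0 : 0 ≤ θ := hθ ▸ div_nonneg hlogb.le hlogc.le
  have hθ1 : 0 ≤ 1 - θ := sub_nonneg.2 (hθ ▸ div_le_one_of_le₀ hlogbc hlogc.le)
  have hA : 0 < ∑ j, a j := Finset.sum_pos (fun j _ ↦ ha j) Finset.univ_nonempty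
  have hN : (Fintype.card ι : ℝ) ≠ 0 := by exact_mod_cast Fintype.card_ne_zero
  have entropy_bound := shiftEntropy_le_add_of_cylEntropy_le hθ0 hθ1 hρ
    (cylEntropy_le_mul_log_sum_sub hν ha) (cylEntropy_le_mul_log_card η)
  have scaled := div_le_div_of_nonneg_right entropy_bound hlogb.le
  rw [Real.log_div hA.ne' hN]
  refine (add_le_add_right scaled _).trans_eq ?_
  rw [hθ]
  field_simp
  ring

end Cylinders

theorem packing_entropy_bound {ι : Type*} [Fintype ι] [MeasurableSpace ι] [DiscreteMeasurableSpace ι] [Nonempty ι]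
    (m n : ℕ) (hnm : n < m) (hn : 2 ≤ n) (θ : ℝ) (hθ : θ = Real.log n / Real.log m)
    (ν η ρ : Measure (ℕ → ι))
    [IsProbabilityMeasure ν] [IsProbabilityMeasure η] [IsProbabilityMeasure ρ]
    (hνinv : Measure.map seqShift ν = ν)
    (hηinv : Measure.map seqShift η = η)
    (hρinv : Measure.map seqShift ρ = ρ)
    (hcomb : ρ = ENNReal.ofReal θ • ν + ENNReal.ofReal (1 - θ) • η)
    (a : ι → ℕ) (ha : ∀ j, 1 ≤ a j) :
    (∑ j, (ν {x | x 0 = j}).toReal * Real.log (a j)) / Real.log m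
        + shiftEntropy ρ / Real.log n
      ≤ Real.log (Fintype.card ι) / Real.log n
        + Real.log ((∑ j, (a j : ℝ)) / (Fintype.card ι : ℝ)) / Real.log m :=
  packing_entropy_bound_general (by exact_mod_cast hn) (by exact_mod_cast hnm.le) hθ hνinv hcomb
    fun j ↦ by exact_mod_cast ha j
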